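/- (Pasch axiom for Busemann surfaces) Let (S,d) be a Busemann surface and let x, y, z, u, v ∈ S be points with u ∈ [x,y] and z ∈ [x,v]. Then [u,v] ∩ [y,z] ≠ ∅. -/

import Mathlib

open Metric Set MeasureTheory

/-- `γ` is a geodesic on the interval `[a, b]`. -/
def IsGeodesicOn {S : Type*} [MetricSpace S] (γ : ℝ → S) (a b : ℝ) : Prop :=
  ∀ s ∈ Set.Icc a b, ∀ t ∈ Set.Icc a b, dist (γ s) (γ t) = |s - t|

/-- `γ` is a geodesic from `x` to `y`. -/
def IsGeodesicFromTo {S : Type*} [MetricSpace S] (γ : ℝ → S) (x y : S) : Prop :=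
  IsGeodesicOn γ 0 (dist x y) ∧ γ 0 = x ∧ γ (dist x y) = y

/-- A geodesic metric space: every pair of points is joined by a geodesic. -/
def IsGeodesicMetricSpace (S : Type*) [MetricSpace S] : Prop :=
  ∀ x y : S, ∃ γ : ℝ → S, IsGeodesicFromTo γ x y

/-- A Busemann space: a geodesic metric space in which the distance function between
any two geodesics is convex. -/
def IsBusemannSpace (S : Type*) [MetricSpace S] : Prop :=
  IsGeodesicMetricSpace S ∧
    ∀ (γ γ' : ℝ → S) (a b a' b' : ℝ), a ≤ b → a' ≤ b' →
      IsGeodesicOn γ a b → IsGeodesicOn γ' a' b' →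
      ConvexOn ℝ (Set.Icc (0 : ℝ) 1)
        (fun t => dist (γ ((1 - t) * a + t * b)) (γ' ((1 - t) * a' + t * b')))

/-- A Busemann surface: a Busemann space homeomorphic to the plane `ℝ²`. -/
def IsBusemannSurface (S : Type*) [MetricSpace S] : Prop :=
  IsBusemannSpace S ∧ Nonempty (S ≃ₜ (ℝ × ℝ))

/-- `G` is the image of a geodesic from `x` to `y`. -/
def IsGeodesicSegment {S : Type*} [MetricSpace S] (x y : S) (G : Set S) : Prop :=
  ∃ γ : ℝ → S, IsGeodesicFromTo γ x y ∧ G = γ '' Set.Icc 0 (dist x y)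

/-- Convexity of a set with respect to a geodesic-segment assignment `seg`. -/
def SegConvex {S : Type*} (seg : S → S → Set S) (R : Set S) : Prop :=
  ∀ p ∈ R, ∀ q ∈ R, seg p q ⊆ R

/-- The convex hull: the smallest `seg`-convex set containing `Q`. -/
def segConvexHull {S : Type*} (seg : S → S → Set S) (Q : Set S) : Set S :=
  ⋂₀ {R : Set S | SegConvex seg R ∧ Q ⊆ R}

/-- A line of `S`: the image of an isometric embedding of `ℝ` into `S`. -/
def IsLineSet {S : Type*} [MetricSpace S] (L : Set S) : Prop :=
  ∃ ℓ : ℝ → S, Isometry ℓ ∧ L = Set.range ℓ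

/-- An open halfplane determined by a line `L`: a connected component of `S \ L`. -/
def IsOpenHalfplane {S : Type*} [MetricSpace S] (L H : Set S) : Prop :=
  ∃ x, x ∉ L ∧ H = connectedComponentIn Lᶜ x

/-- A closed halfplane determined by a line `L`: an open halfplane together with `L`. -/
def IsClosedHalfplane {S : Type*} [MetricSpace S] (L H : Set S) : Prop :=
  ∃ H', IsOpenHalfplane L H' ∧ H = H' ∪ L

/-- `X` and `Y` are line-separable: they lie in different open halfplanes of some line. -/
def LineSeparable {S : Type*} [MetricSpace S] (X Y : Set S) : Prop :=
  ∃ L H₁ H₂ : Set S, IsLineSet L ∧ IsOpenHalfplane L H₁ ∧ IsOpenHalfplane L H₂ ∧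
    H₁ ≠ H₂ ∧ X ⊆ H₁ ∧ Y ⊆ H₂

/-- `X` and `Y` are weakly line-separable: they lie in different closed halfplanes of
some line. -/
def WeaklyLineSeparable {S : Type*} [MetricSpace S] (X Y : Set S) : Prop :=
  ∃ L H₁ H₂ : Set S, IsLineSet L ∧ IsClosedHalfplane L H₁ ∧ IsClosedHalfplane L H₂ ∧
    H₁ ≠ H₂ ∧ X ⊆ H₁ ∧ Y ⊆ H₂

/-- `Q` is in general position: no three distinct points of `Q` lie on a common line. -/
def InGeneralPosition {S : Type*} [MetricSpace S] (Q : Set S) : Prop :=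
  ∀ x ∈ Q, ∀ y ∈ Q, ∀ z ∈ Q, x ≠ y → y ≠ z → x ≠ z →
    ∀ L : Set S, IsLineSet L → ¬(x ∈ L ∧ y ∈ L ∧ z ∈ L)

/-- `L` is a tangent line of the set `K`. -/
def IsTangentLine {S : Type*} [MetricSpace S] (L K : Set S) : Prop :=
  IsLineSet L ∧ (K ∩ L).Nonempty ∧ ∃ H, IsClosedHalfplane L H ∧ K ⊆ H

/-- `L` is an inner bitangent of `K'` and `K''`. -/
def IsInnerBitangent {S : Type*} [MetricSpace S] (L K' K'' : Set S) : Prop :=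
  IsTangentLine L K' ∧ IsTangentLine L K'' ∧
    ∃ H₁ H₂, IsClosedHalfplane L H₁ ∧ IsClosedHalfplane L H₂ ∧ H₁ ≠ H₂ ∧
      K' ⊆ H₁ ∧ K'' ⊆ H₂

/-!
Let `φ` be a continuous injection of the space into `ℂ`. For a segment `[a, b]` and a point `p` off
it, the *sweep* `p : ab` is the increment of `log (φ - φ p)` along `[a, b]`; its imaginary part is
the angle under which `[a, b]` is seen from `p`. Two facts about sweeps follow from lifting maps of
squares through `exp`: `p : ab + p : bc = p : ac` if `p` avoids the geodesic cone from `c` over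
`[a, b]`, and `c : ab + b : cd = a : cd + d : ab` if `[a, b]` and `[c, d]` are disjoint.

Replacing `x` by the last common point of `[x, y]` and `[x, v]`, we may assume that these segments
share only `x`. If `[u, v]` and `[y, z]` were disjoint, the two facts would make the angle sum
`x : yv + y : vx + v : xy` of the triangle `xyv` equal to its own negative, hence zero. But the
exponential of this sum is `-1`.
-/

/-! ### Increment of the logarithm along a path -/

theorem exists_continuous_exp_eq {A : Type*} [TopologicalSpace A] [SimplyConnectedSpace A]
    [LocallyPathConnectedSpace A] {f : A → ℂ} (hf : Continuous f) (hf₀ : ∀ a, f a ≠ 0) :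
    ∃ L : A → ℂ, Continuous L ∧ ∀ a, Complex.exp (L a) = f a := by
  obtain ⟨a₀⟩ : Nonempty A := inferInstance
  obtain ⟨L, ⟨-, hL⟩, -⟩ := Complex.isCoveringMapOn_exp.existsUnique_continuousMap_lifts
    (⟨f, hf⟩ : C(A, ℂ)) (Complex.exp_log (hf₀ a₀)) hf₀
  exact ⟨L, L.continuous, congrFun hL⟩

open Classical in
/-- The increment over `[0, 1]` of a continuous logarithm of `f`, with junk value `0` if `f` has no
continuous logarithm. Paths are parametrized by all of `ℝ`, which is simply connected. -/
noncomputable def logChange (f : ℝ → ℂ) : ℂ :=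
  if h : ∃ L : ℝ → ℂ, Continuous L ∧ ∀ t, Complex.exp (L t) = f t then
    h.choose 1 - h.choose 0
  else 0

theorem sub_eq_sub_of_exp_eq {L M : ℝ → ℂ} (hL : Continuous L) (hM : Continuous M)
    (h : ∀ t, Complex.exp (L t) = Complex.exp (M t)) (s t : ℝ) : L s - L t = M s - M t := by
  have translate_eq : (fun r => L r + (M t - L t)) = M := by
    refine Complex.isCoveringMap_exp.eq_of_comp_eq (by fun_prop) hM ?_ t (by ring)
    funext r
    apply Subtype.ext
    simp only [Function.comp, Complex.exp_add, Complex.exp_sub, h]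
    field_simp [Complex.exp_ne_zero]
  rw [← congrFun translate_eq s]
  ring

theorem logChange_eq {f L : ℝ → ℂ} (hL : Continuous L) (h : ∀ t, Complex.exp (L t) = f t) :
    logChange f = L 1 - L 0 := by
  have hex : ∃ L : ℝ → ℂ, Continuous L ∧ ∀ t, Complex.exp (L t) = f t := ⟨L, hL, h⟩
  obtain ⟨hM, hMf⟩ := hex.choose_spec
  rw [logChange, dif_pos hex]
  exact sub_eq_sub_of_exp_eq hM hL (fun t => (hMf t).trans (h t).symm) 1 0

theorem exp_logChange {f : ℝ → ℂ} (hf : Continuous f) (hf₀ : ∀ t, f t ≠ 0) :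
    Complex.exp (logChange f) = f 1 / f 0 := by
  obtain ⟨L, hL, h⟩ := exists_continuous_exp_eq hf hf₀
  rw [logChange_eq hL h, Complex.exp_sub, h, h]

theorem logChange_neg {f : ℝ → ℂ} (hf : Continuous f) (hf₀ : ∀ t, f t ≠ 0) :
    logChange (fun t => -f t) = logChange f := by
  obtain ⟨L, hL, h⟩ := exists_continuous_exp_eq hf hf₀
  have exp_add_pi (t : ℝ) : Complex.exp (L t + Real.pi * Complex.I) = -f t := by
    rw [Complex.exp_add, h, Complex.exp_pi_mul_I, mul_neg_one]
  rw [logChange_eq hL h, logChange_eq (by fun_prop) exp_add_pi, add_sub_add_right_eq_sub]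

theorem logChange_const {c : ℂ} (hc : c ≠ 0) : logChange (fun _ => c) = 0 := by
  rw [logChange_eq continuous_const fun _ => Complex.exp_log hc, sub_self]

theorem logChange_square {H : ℝ × ℝ → ℂ} (hH : Continuous H) (hH₀ : ∀ p, H p ≠ 0) :
    logChange (fun t => H (0, t)) + logChange (fun s => H (s, 1)) =
      logChange (fun s => H (s, 0)) + logChange (fun t => H (1, t)) := by
  obtain ⟨L, hL, h⟩ := exists_continuous_exp_eq hH hH₀
  rw [logChange_eq (L := fun t => L (0, t)) (by fun_prop) (fun t => h _),
    logChange_eq (L := fun s => L (s, 1)) (by fun_prop) (fun s => h _),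
    logChange_eq (L := fun s => L (s, 0)) (by fun_prop) (fun s => h _),
    logChange_eq (L := fun t => L (1, t)) (by fun_prop) (fun t => h _)]
  ring

/-! ### Metric betweenness -/

/-- Metric betweenness: `w` lies in the metric interval between `a` and `b`. In a uniquely geodesic
space this says `w ∈ [a, b]`. -/
def MetricBtw {S : Type*} [MetricSpace S] (a w b : S) : Prop :=
  dist a w + dist w b = dist a b

namespace MetricBtw

variable {S : Type*} [MetricSpace S] {a b c d : S}

theorem left (a b : S) : MetricBtw a a b := by simp [MetricBtw]

theorem right (a b : S) : MetricBtw a b b := by simp [MetricBtw]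

theorem symm (h : MetricBtw a b c) : MetricBtw c b a := by
  unfold MetricBtw at *
  rw [dist_comm c b, dist_comm b a, dist_comm c a]
  linarith

theorem dist_le (h : MetricBtw a b c) : dist a b ≤ dist a c := by
  unfold MetricBtw at h
  linarith [dist_nonneg (x := b) (y := c)]

theorem eq_of_dist_le (h : MetricBtw a b c) (hle : dist a c ≤ dist a b) : b = c := by
  unfold MetricBtw at h
  exact dist_le_zero.1 (by linarith)

theorem eq_of_self (h : MetricBtw a b a) : b = a :=
  h.eq_of_dist_le (by simp)

theorem antisymm (h : MetricBtw a b c) (h' : MetricBtw a c b) : b = c :=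
  h.eq_of_dist_le h'.dist_le

theorem trans_right_left (h : MetricBtw a b d) (h' : MetricBtw b c d) : MetricBtw a b c := by
  unfold MetricBtw at *
  linarith [dist_triangle a b c, dist_triangle a c d]

theorem trans_right (h : MetricBtw a b d) (h' : MetricBtw b c d) : MetricBtw a c d := by
  unfold MetricBtw at *
  linarith [dist_triangle a b c, dist_triangle a c d]

theorem trans_left (h : MetricBtw a c d) (h' : MetricBtw a b c) : MetricBtw a b d :=
  (h.symm.trans_right h'.symm).symm

theorem trans_left_right (h : MetricBtw a c d) (h' : MetricBtw a b c) : MetricBtw b c d :=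
  (h.symm.trans_right_left h'.symm).symm

end MetricBtw

/-- Every metric interval is totally ordered by betweenness, as it is in a uniquely geodesic
space. -/
def HasLinearIntervals (S : Type*) [MetricSpace S] : Prop :=
  ∀ ⦃a b p q : S⦄, MetricBtw a p b → MetricBtw a q b → MetricBtw a p q ∨ MetricBtw a q p

theorem HasLinearIntervals.eq_of_dist_eq {S : Type*} [MetricSpace S] (hS : HasLinearIntervals S)
    {a b p q : S} (hp : MetricBtw a p b) (hq : MetricBtw a q b) (h : dist a p = dist a q) :
    p = q := by
  rcases hS hp hq with hpq | hqp
  · exact hpq.eq_of_dist_le h.ge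
  · exact (hqp.eq_of_dist_le h.le).symm

/-! ### Sweeps of segments seen from a point -/

/-- A choice, for any two points, of a path between them inside their metric interval, depending
continuously on its starting point. The path from `a` to `b` is `path a b` on `[0, 1]`; as for
`logChange`, it is extended to all of `ℝ`. -/
structure ContinuousBicombing (S : Type*) [MetricSpace S] where
  path : S → S → ℝ → S
  path_zero : ∀ a b, path a b 0 = a
  path_one : ∀ a b, path a b 1 = b
  metricBtw_path : ∀ a b t, MetricBtw a (path a b t) b
  continuous_path_left : ∀ b, Continuous fun q : S × ℝ => path q.1 b q.2

namespace ContinuousBicombing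

variable {S : Type*} [MetricSpace S] (B : ContinuousBicombing S) (φ : C(S, ℂ))

@[fun_prop]
theorem continuous_path (a b : S) : Continuous (B.path a b) :=
  (B.continuous_path_left b).comp (Continuous.prodMk_right a)

/-- The increment of `log (φ - φ p)` along the path from `a` to `b`; its imaginary part is the angle
under which that path is seen from `p`. -/
noncomputable def sweep (p a b : S) : ℂ :=
  logChange fun t => φ (B.path a b t) - φ p

/-- The sum of the two angles of the triangle `xab` at the base `ab`, with the orientation of the
boundary `x → a → b → x`. -/
noncomputable def baseSweep (x a b : S) : ℂ :=
  B.sweep φ b x a + B.sweep φ a b x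

variable {φ} {a b c d p u v x y z : S}

section
variable (hφ : Function.Injective φ)
include hφ

theorem sub_path_ne_zero (h : ¬ MetricBtw a p b) (t : ℝ) : φ (B.path a b t) - φ p ≠ 0 := by
  intro h₀
  have path_eq : B.path a b t = p := hφ (sub_eq_zero.1 h₀)
  exact h (path_eq ▸ B.metricBtw_path a b t)

theorem exp_sweep (h : ¬ MetricBtw a p b) :
    Complex.exp (B.sweep φ p a b) = (φ b - φ p) / (φ a - φ p) := by
  rw [sweep, exp_logChange (by fun_prop) (B.sub_path_ne_zero hφ h), B.path_zero, B.path_one]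

theorem sweep_add_sweep (h : ∀ a', MetricBtw a a' b → ¬ MetricBtw a' p c) :
    B.sweep φ p a b + B.sweep φ p b c = B.sweep φ p a c := by
  have cone_continuous : Continuous fun q : ℝ × ℝ => B.path (B.path a b q.1) c q.2 :=
    (B.continuous_path_left c).comp (by fun_prop : Continuous fun q : ℝ × ℝ =>
      (B.path a b q.1, q.2))
  have cone_square := logChange_square (H := fun q => φ (B.path (B.path a b q.1) c q.2) - φ p)
    (by fun_prop) fun q => B.sub_path_ne_zero hφ (h _ (B.metricBtw_path a b q.1)) q.2
  have apex_ne : φ c - φ p ≠ 0 := by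
    simpa only [B.path_one] using B.sub_path_ne_zero hφ (h a (.left a b)) 1
  simp only [B.path_zero, B.path_one, logChange_const apex_ne, add_zero] at cone_square
  exact cone_square.symm

theorem sweep_add_sweep_of_metricBtw (hb : MetricBtw a b c) (hp : ¬ MetricBtw a p c) :
    B.sweep φ p a b + B.sweep φ p b c = B.sweep φ p a c :=
  B.sweep_add_sweep hφ fun _ ha' hp' => hp ((hb.trans_left ha').trans_right hp')

theorem sweep_self (hp : p ≠ a) : B.sweep φ p a a = 0 := by
  have := B.sweep_add_sweep_of_metricBtw hφ (.left a a) fun h => hp h.eq_of_self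
  exact add_eq_left.1 this

theorem sweep_symm (hp : ¬ MetricBtw a p b) : B.sweep φ p b a = -B.sweep φ p a b := by
  have back_and_forth : B.sweep φ p a b + B.sweep φ p b a = B.sweep φ p a a :=
    B.sweep_add_sweep hφ fun _ ha' hp' => hp (ha'.trans_left hp'.symm)
  have hpa : p ≠ a := by
    rintro rfl
    exact hp (.left p b)
  rw [B.sweep_self hφ hpa] at back_and_forth
  exact eq_neg_of_add_eq_zero_right back_and_forth

theorem sweep_add_sweep_of_disjoint (h : ∀ p, MetricBtw a p b → ¬ MetricBtw c p d) :
    B.sweep φ c a b + B.sweep φ b c d = B.sweep φ a c d + B.sweep φ d a b := by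
  have ne_zero (s t : ℝ) : φ (B.path c d t) - φ (B.path a b s) ≠ 0 :=
    B.sub_path_ne_zero hφ (h _ (B.metricBtw_path a b s)) t
  have square := logChange_square (H := fun q => φ (B.path c d q.2) - φ (B.path a b q.1))
    (by fun_prop) fun q => ne_zero q.1 q.2
  have reverse (t : ℝ) : logChange (fun s => φ (B.path c d t) - φ (B.path a b s)) =
      logChange fun s => φ (B.path a b s) - φ (B.path c d t) := by
    rw [← logChange_neg (by fun_prop) fun s => ne_zero s t]
    simp only [neg_sub]
  simp only [reverse] at square
  simp only [B.path_zero, B.path_one] at square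
  exact square.symm

/-! ### Triangles -/

theorem baseSweep_swap (ha : ¬ MetricBtw x a b) (hb : ¬ MetricBtw x b a) :
    B.baseSweep φ x b a = -B.baseSweep φ x a b := by
  have at_a := B.sweep_symm hφ ha
  have at_b := B.sweep_symm hφ hb
  unfold baseSweep
  linear_combination at_a + at_b

theorem exp_sweep_add_baseSweep (hx : ¬ MetricBtw a x b) (ha : ¬ MetricBtw b a x)
    (hb : ¬ MetricBtw x b a) : Complex.exp (B.sweep φ x a b + B.baseSweep φ x a b) = -1 := by
  have sub_ne {p q r : S} (h : ¬ MetricBtw p q r) : φ p - φ q ≠ 0 := by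
    simpa only [B.path_zero] using B.sub_path_ne_zero hφ h 0
  have hax := sub_ne hx
  have hba := sub_ne ha
  have hxb := sub_ne hb
  rw [baseSweep, Complex.exp_add, Complex.exp_add, B.exp_sweep hφ hx, B.exp_sweep hφ ha,
    B.exp_sweep hφ hb]
  field_simp
  ring

theorem baseSweep_eq_add_sweep (hu : MetricBtw x u y) (hz : ¬ MetricBtw x z y)
    (h : ∀ p, MetricBtw u p y → ¬ MetricBtw z p x) :
    B.baseSweep φ x y z = B.baseSweep φ x u z + B.sweep φ x u y := by
  have at_z := B.sweep_add_sweep_of_metricBtw hφ hu hz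
  have opposite := B.sweep_add_sweep_of_disjoint hφ h
  unfold baseSweep
  linear_combination opposite - at_z

theorem sweep_apex_add_sweep (hu : MetricBtw x u y) (hx : ¬ MetricBtw u x v) :
    B.sweep φ x u y + B.sweep φ x y v = B.sweep φ x u v :=
  B.sweep_add_sweep hφ fun _ hu' hx' =>
    hx (hx'.symm.trans_right_left (hu.trans_right_left hu')).symm

/-- Consider pairs of points on the broken paths `x → u → v` and `y → z → x`. Of the four pairs of
segments only `[x, u]` and `[z, x]` meet, so the square of parameters can be crossed along its
boundary (left-hand side) or along the boundary of the corner left out (right-hand side). -/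
theorem baseSweep_eq_of_disjoint (hu : MetricBtw x u y) (hz : MetricBtw x z v)
    (hv : ¬ MetricBtw x v y) (hd : ∀ p, MetricBtw u p v → ¬ MetricBtw y p z) :
    B.baseSweep φ x v y = B.sweep φ x y z + B.baseSweep φ x u z + B.sweep φ x u v := by
  have hu_notMem : ¬ MetricBtw y u z := hd u (.left u v)
  have hz_notMem : ¬ MetricBtw u z v := fun h => hd z h (.right y z)
  have hy_notMem : ¬ MetricBtw u y v := fun h => hd y h (.left y z)
  have hv_notMem : ¬ MetricBtw z v y := fun h => hd v (.right u v) h.symm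
  have uv_yz := B.sweep_add_sweep_of_disjoint hφ hd
  have xu_yz := B.sweep_add_sweep_of_disjoint hφ (a := x) (b := u) (c := y) (d := z)
    fun p hp hp' => hu_notMem (hp'.trans_left (hu.trans_left_right hp).symm)
  have uv_zx := B.sweep_add_sweep_of_disjoint hφ (a := u) (b := v) (c := z) (d := x)
    fun p hp hp' => hz_notMem (hp.trans_right (hz.trans_left_right hp'.symm))
  have from_y : B.sweep φ y x u + B.sweep φ y u v = B.sweep φ y x v :=
    B.sweep_add_sweep hφ fun u' hu' hy =>
      hy_notMem (hy.trans_left_right (hu.trans_left_right hu'))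
  have from_v : B.sweep φ v x z + B.sweep φ v z y = B.sweep φ v x y :=
    B.sweep_add_sweep hφ fun z' hz' hv =>
      hv_notMem (hv.trans_left_right (hz.trans_left_right hz'))
  have rev_xz : B.sweep φ v z x = -B.sweep φ v x z := B.sweep_symm hφ fun h => by
    obtain rfl := h.antisymm hz
    exact hv_notMem (.left v y)
  have rev_zy := B.sweep_symm hφ hv_notMem
  have rev_xy := B.sweep_symm hφ hv
  unfold baseSweep
  linear_combination uv_yz + xu_yz + uv_zx - from_y + from_v - rev_xz - rev_zy + rev_xy

end

/-! ### The Pasch axiom for metric betweenness -/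

section
include B

theorem exists_metricBtw_metricBtw_of_inter_eq_apex (hφ : Function.Injective φ)
    (hu : MetricBtw x u y) (hz : MetricBtw x z v)
    (hinter : ∀ p, MetricBtw x p y → MetricBtw x p v → p = x) (hux : u ≠ x) (hzx : z ≠ x) :
    ∃ p, MetricBtw u p v ∧ MetricBtw y p z := by
  by_contra! hd
  have hyx : y ≠ x := fun h => hux (h ▸ hu).eq_of_self
  have hvx : v ≠ x := fun h => hzx (h ▸ hz).eq_of_self
  have hy : ¬ MetricBtw x y v := fun h => hyx (hinter y (.right x y) h)
  have hv : ¬ MetricBtw x v y := fun h => hvx (hinter v h (.right x v))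
  have hy' : ¬ MetricBtw x y z := fun h => hy (hz.trans_left h)
  have hz' : ¬ MetricBtw x z y := fun h => hzx (hinter z h hz)
  have hx_uv : ¬ MetricBtw u x v := fun h => hd z (h.trans_right hz) (.right y z)
  have hx_yz : ¬ MetricBtw y x z := fun h => hd u (.left u v) (h.trans_left hu.symm)
  have hx_yv : ¬ MetricBtw y x v := fun h => hx_yz (h.trans_right_left hz)
  have slide_u := B.baseSweep_eq_add_sweep hφ hu hz' fun p hp hp' => by
    obtain rfl := hinter p (hu.trans_right hp) (hz.trans_left hp'.symm)
    exact hux (hu.trans_right_left hp).eq_of_self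
  have slide_z := B.baseSweep_eq_add_sweep hφ hz hy fun p hp hp' => by
    obtain rfl := hinter p hp'.symm (hz.trans_right hp)
    exact hzx (hz.trans_right_left hp).eq_of_self
  have swap_z := B.baseSweep_swap hφ hy' hz'
  have swap_v := B.baseSweep_swap hφ hy hv
  have crossing := B.baseSweep_eq_of_disjoint hφ hu hz hv hd
  have apex_u := B.sweep_apex_add_sweep hφ hu hx_uv
  have apex_z := B.sweep_apex_add_sweep hφ hz fun h => hx_yz h.symm
  have rev_yz := B.sweep_symm hφ hx_yz
  have rev_yv := B.sweep_symm hφ hx_yv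
  have angle_sum_eq_zero : B.sweep φ x y v + B.baseSweep φ x y v = 0 := by
    linear_combination swap_v +
      (slide_u - slide_z - swap_z - crossing + apex_u - apex_z - rev_yz + rev_yv) / 2
  have exp_angle_sum := B.exp_sweep_add_baseSweep hφ hx_yv (fun h => hy h.symm) hv
  rw [angle_sum_eq_zero, Complex.exp_zero] at exp_angle_sum
  norm_num at exp_angle_sum

theorem isCompact_setOf_metricBtw (hS : HasLinearIntervals S) (a b : S) :
    IsCompact {p | MetricBtw a p b} := by
  have path_compact : IsCompact (B.path a b '' Icc 0 1) :=
    isCompact_Icc.image (B.continuous_path a b)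
  refine path_compact.of_isClosed_subset (isClosed_eq (by fun_prop) (by fun_prop)) fun p hp => ?_
  have ivt := intermediate_value_Icc (zero_le_one' ℝ)
    (f := fun t => dist a (B.path a b t)) (by fun_prop)
  rw [B.path_zero, B.path_one, dist_self] at ivt
  obtain ⟨t, ht, hdist⟩ := ivt ⟨dist_nonneg, MetricBtw.dist_le hp⟩
  exact ⟨t, ht, hS.eq_of_dist_eq (B.metricBtw_path a b t) hp hdist⟩

theorem exists_last_common_point (hS : HasLinearIntervals S) (x y v : S) :
    ∃ w, MetricBtw x w y ∧ MetricBtw x w v ∧ ∀ p, MetricBtw w p y → MetricBtw w p v → p = w := by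
  have common_compact : IsCompact ({p | MetricBtw x p y} ∩ {p | MetricBtw x p v}) :=
    (B.isCompact_setOf_metricBtw hS x y).inter (B.isCompact_setOf_metricBtw hS x v)
  obtain ⟨w, ⟨hwy, hwv⟩, hmax⟩ := common_compact.exists_isMaxOn ⟨x, .left x y, .left x v⟩
    (f := fun p => dist x p) (by fun_prop)
  refine ⟨w, hwy, hwv, fun p hpy hpv => ?_⟩
  have hle : dist x p ≤ dist x w := hmax ⟨hwy.trans_right hpy, hwv.trans_right hpv⟩
  exact ((hwy.trans_right_left hpy).eq_of_dist_le hle).symm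

theorem exists_metricBtw_metricBtw (hS : HasLinearIntervals S) (hφ : Function.Injective φ)
    (hu : MetricBtw x u y) (hz : MetricBtw x z v) : ∃ p, MetricBtw u p v ∧ MetricBtw y p z := by
  by_contra! hd
  have not_xzu : ¬ MetricBtw x z u := fun h => hd u (.left u v) (hu.trans_left_right h).symm
  have not_xuz : ¬ MetricBtw x u z := fun h => hd z (hz.trans_left_right h) (.right y z)
  have hu_notMem : ¬ MetricBtw x u v := fun h => (hS h hz).elim not_xuz not_xzu
  have hz_notMem : ¬ MetricBtw x z y := fun h => (hS h hu).elim not_xzu not_xuz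
  obtain ⟨w, hwy, hwv, hw⟩ := B.exists_last_common_point hS x y v
  have hwu : MetricBtw x w u :=
    (hS hwy hu).resolve_right fun h => hu_notMem (hwv.trans_left h)
  have hwz : MetricBtw x w z :=
    (hS hwv hz).resolve_right fun h => hz_notMem (hwy.trans_left h)
  have huw : u ≠ w := by
    rintro rfl
    exact hu_notMem hwv
  have hzw : z ≠ w := by
    rintro rfl
    exact hz_notMem hwy
  obtain ⟨p, hpuv, hpyz⟩ := B.exists_metricBtw_metricBtw_of_inter_eq_apex hφ
    (hu.trans_left_right hwu) (hz.trans_left_right hwz) hw huw hzw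
  exact hd p hpuv hpyz

end

end ContinuousBicombing

/-! ### Geodesics in Busemann spaces -/

section Geodesics

variable {S : Type*} [MetricSpace S] {γ γ' : ℝ → S} {a b w : S} {s t : ℝ}

theorem IsGeodesicFromTo.dist_left (hγ : IsGeodesicFromTo γ a b) (hs : s ∈ Icc 0 (dist a b)) :
    dist a (γ s) = s := by
  rw [← hγ.2.1, hγ.1 0 (left_mem_Icc.2 dist_nonneg) s hs, zero_sub, abs_neg, abs_of_nonneg hs.1]

theorem IsGeodesicFromTo.dist_right (hγ : IsGeodesicFromTo γ a b) (hs : s ∈ Icc 0 (dist a b)) :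
    dist (γ s) b = dist a b - s := by
  conv_lhs => rw [← hγ.2.2]
  rw [hγ.1 s hs _ (right_mem_Icc.2 dist_nonneg), abs_sub_comm, abs_of_nonneg (sub_nonneg.2 hs.2)]

theorem IsGeodesicFromTo.metricBtw (hγ : IsGeodesicFromTo γ a b) (hs : s ∈ Icc 0 (dist a b)) :
    MetricBtw a (γ s) b := by
  rw [MetricBtw, hγ.dist_left hs, hγ.dist_right hs, add_sub_cancel]

theorem isGeodesicOn_of_dist_le {r R : ℝ}
    (hle : ∀ s t, r ≤ s → s ≤ t → t ≤ R → dist (γ s) (γ t) ≤ t - s)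
    (hge : R - r ≤ dist (γ r) (γ R)) : IsGeodesicOn γ r R := by
  have dist_eq (s t : ℝ) (hs : r ≤ s) (hst : s ≤ t) (ht : t ≤ R) : dist (γ s) (γ t) = t - s := by
    refine (hle s t hs hst ht).antisymm ?_
    have := dist_triangle4 (γ r) (γ s) (γ t) (γ R)
    linarith [hle r s le_rfl hs (hst.trans ht), hle t R (hs.trans hst) ht le_rfl]
  intro s hs t ht
  rcases le_total s t with hst | hts
  · rw [dist_eq s t hs.1 hst ht.2, abs_sub_comm, abs_of_nonneg (sub_nonneg.2 hst)]
  · rw [dist_comm, dist_eq t s ht.1 hts hs.2, abs_of_nonneg (sub_nonneg.2 hts)]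

theorem IsGeodesicFromTo.concat {α β : ℝ → S} (hα : IsGeodesicFromTo α a w)
    (hβ : IsGeodesicFromTo β w b) (hw : MetricBtw a w b) :
    IsGeodesicFromTo (fun t => if t ≤ dist a w then α t else β (t - dist a w)) a b := by
  have hw' : dist a w + dist w b = dist a b := hw
  set δ : ℝ → S := fun t => if t ≤ dist a w then α t else β (t - dist a w)
  have δ_left {t : ℝ} (ht : t ≤ dist a w) : δ t = α t := if_pos ht
  have δ_right {t : ℝ} (ht : dist a w ≤ t) : δ t = β (t - dist a w) := by
    rcases ht.eq_or_lt with rfl | ht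
    · rw [δ_left le_rfl, hα.2.2, sub_self, hβ.2.1]
    · exact if_neg ht.not_ge
  have δ_zero : δ 0 = a := (δ_left dist_nonneg).trans hα.2.1
  have δ_dist : δ (dist a b) = b := by
    rw [δ_right hw.dist_le, ← hw', add_sub_cancel_left, hβ.2.2]
  refine ⟨isGeodesicOn_of_dist_le (fun s t hs hst ht => ?_) ?_, δ_zero, δ_dist⟩
  · rcases le_total t (dist a w) with htw | hwt
    · rw [δ_left htw, δ_left (hst.trans htw), hα.1 s ⟨hs, hst.trans htw⟩ t ⟨hs.trans hst, htw⟩,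
        abs_sub_comm, abs_of_nonneg (sub_nonneg.2 hst)]
    have hβt : t - dist a w ∈ Icc 0 (dist w b) := ⟨by linarith, by linarith⟩
    rw [δ_right hwt]
    rcases le_total s (dist a w) with hsw | hws
    · rw [δ_left hsw]
      linarith [dist_triangle (α s) w (β (t - dist a w)), hα.dist_right ⟨hs, hsw⟩,
        hβ.dist_left hβt]
    · rw [δ_right hws, hβ.1 (s - dist a w) ⟨by linarith, by linarith⟩ _ hβt,
        sub_sub_sub_cancel_right, abs_sub_comm, abs_of_nonneg (sub_nonneg.2 hst)]
  · rw [δ_zero, δ_dist, sub_zero]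

theorem IsBusemannSpace.dist_geodesic_le (hS : IsBusemannSpace S) {L L' : ℝ} (hL : 0 ≤ L)
    (hL' : 0 ≤ L') (hγ : IsGeodesicOn γ 0 L) (hγ' : IsGeodesicOn γ' 0 L') (ht : t ∈ Icc 0 1) :
    dist (γ (t * L)) (γ' (t * L')) ≤
      (1 - t) * dist (γ 0) (γ' 0) + t * dist (γ L) (γ' L') := by
  have convex := (hS.2 γ γ' 0 L 0 L' hL hL' hγ hγ').2 (left_mem_Icc.2 zero_le_one)
    (right_mem_Icc.2 zero_le_one) (sub_nonneg.2 ht.2) ht.1 (sub_add_cancel 1 t)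
  simpa using convex

theorem IsBusemannSpace.eqOn_geodesic (hS : IsBusemannSpace S) (hγ : IsGeodesicFromTo γ a b)
    (hγ' : IsGeodesicFromTo γ' a b) : EqOn γ γ' (Icc 0 (dist a b)) := by
  intro s hs
  have hs' : s / dist a b * dist a b = s :=
    div_mul_cancel_of_imp fun h => le_antisymm (h ▸ hs.2) hs.1
  have hle := hS.dist_geodesic_le dist_nonneg dist_nonneg hγ.1 hγ'.1
    (t := s / dist a b) ⟨div_nonneg hs.1 dist_nonneg, div_le_one_of_le₀ hs.2 dist_nonneg⟩
  rw [hs', hγ.2.1, hγ.2.2, hγ'.2.1, hγ'.2.2] at hle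
  simpa using hle

theorem IsBusemannSpace.geodesic_dist_eq (hS : IsBusemannSpace S) (hγ : IsGeodesicFromTo γ a b)
    (hw : MetricBtw a w b) : γ (dist a w) = w := by
  obtain ⟨α, hα⟩ := hS.1 a w
  obtain ⟨β, hβ⟩ := hS.1 w b
  rw [hS.eqOn_geodesic hγ (hα.concat hβ hw) ⟨dist_nonneg, hw.dist_le⟩]
  exact (if_pos le_rfl).trans hα.2.2

theorem IsBusemannSpace.mem_iff_metricBtw (hS : IsBusemannSpace S) {G : Set S}
    (hG : IsGeodesicSegment a b G) : w ∈ G ↔ MetricBtw a w b := by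
  obtain ⟨γ, hγ, rfl⟩ := hG
  constructor
  · rintro ⟨s, hs, rfl⟩
    exact hγ.metricBtw hs
  · exact fun hw => ⟨dist a w, ⟨dist_nonneg, hw.dist_le⟩, hS.geodesic_dist_eq hγ hw⟩

theorem IsBusemannSpace.hasLinearIntervals (hS : IsBusemannSpace S) : HasLinearIntervals S := by
  intro a b p q hp hq
  obtain ⟨γ, hγ⟩ := hS.1 a b
  have dist_pq := hγ.1 _ ⟨dist_nonneg, hp.dist_le⟩ _ ⟨dist_nonneg, hq.dist_le⟩
  rw [hS.geodesic_dist_eq hγ hp, hS.geodesic_dist_eq hγ hq] at dist_pq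
  rcases le_total (dist a p) (dist a q) with hpq | hqp
  · left
    rw [MetricBtw, dist_pq, abs_sub_comm, abs_of_nonneg (sub_nonneg.2 hpq), add_sub_cancel]
  · right
    rw [MetricBtw, dist_comm q p, dist_pq, abs_of_nonneg (sub_nonneg.2 hqp), add_sub_cancel]

/-! ### The geodesic bicombing -/

/-- A chosen geodesic from `a` to `b`, reparametrized proportionally to `[0, 1]` and extended by
constants to `ℝ`. -/
noncomputable def IsGeodesicMetricSpace.path (hS : IsGeodesicMetricSpace S) (a b : S) (t : ℝ) : S :=
  (hS a b).choose (projIcc 0 1 zero_le_one t * dist a b)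

theorem projIcc_mul_dist_mem_Icc (a b : S) (t : ℝ) :
    (projIcc 0 1 zero_le_one t : ℝ) * dist a b ∈ Icc 0 (dist a b) :=
  ⟨mul_nonneg (projIcc 0 1 zero_le_one t).2.1 dist_nonneg,
    mul_le_of_le_one_left dist_nonneg (projIcc 0 1 zero_le_one t).2.2⟩

theorem IsGeodesicMetricSpace.dist_path_path (hS : IsGeodesicMetricSpace S) (a b : S) (s t : ℝ) :
    dist (hS.path a b s) (hS.path a b t) =
      |(projIcc 0 1 zero_le_one s : ℝ) - projIcc 0 1 zero_le_one t| * dist a b := by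
  rw [path, path, (hS a b).choose_spec.1 _ (projIcc_mul_dist_mem_Icc a b s) _
    (projIcc_mul_dist_mem_Icc a b t), ← sub_mul, abs_mul, abs_of_nonneg dist_nonneg]

theorem IsBusemannSpace.dist_path_le (hS : IsBusemannSpace S) (a a' b : S) (t : ℝ) :
    dist (hS.1.path a b t) (hS.1.path a' b t) ≤ dist a a' := by
  obtain ⟨hγ, hγ₀, hγ₁⟩ := (hS.1 a b).choose_spec
  obtain ⟨hγ', hγ'₀, hγ'₁⟩ := (hS.1 a' b).choose_spec
  have ht := (projIcc 0 1 zero_le_one t).2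
  have hle := hS.dist_geodesic_le dist_nonneg dist_nonneg hγ hγ' ht
  rw [hγ₀, hγ₁, hγ'₀, hγ'₁, dist_self, mul_zero, add_zero] at hle
  exact hle.trans (mul_le_of_le_one_left dist_nonneg (sub_le_self 1 ht.1))

theorem IsBusemannSpace.continuous_path_left (hS : IsBusemannSpace S) (b : S) :
    Continuous fun q : S × ℝ => hS.1.path q.1 b q.2 := by
  refine continuous_iff_continuousAt.2 fun ⟨a, t⟩ => tendsto_iff_dist_tendsto_zero.2 ?_
  set τ : ℝ → ℝ := fun s => projIcc 0 1 zero_le_one s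
  have τ_continuous : Continuous τ := continuous_subtype_val.comp continuous_projIcc
  have bound_continuous :
      Continuous fun q : S × ℝ => dist q.1 a + |τ q.2 - τ t| * dist a b := by fun_prop
  have bound_tendsto := bound_continuous.tendsto (a, t)
  simp only [dist_self, sub_self, abs_zero, zero_mul, add_zero] at bound_tendsto
  refine squeeze_zero (fun _ => dist_nonneg) (fun q => ?_) bound_tendsto
  calc dist (hS.1.path q.1 b q.2) (hS.1.path a b t)
      ≤ dist (hS.1.path q.1 b q.2) (hS.1.path a b q.2)
        + dist (hS.1.path a b q.2) (hS.1.path a b t) := dist_triangle _ _ _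
    _ ≤ dist q.1 a + |τ q.2 - τ t| * dist a b :=
        add_le_add (hS.dist_path_le q.1 a b q.2) (hS.1.dist_path_path a b q.2 t).le

/-- The bicombing of a Busemann space by its geodesics. -/
noncomputable def IsBusemannSpace.geodesicBicombing (hS : IsBusemannSpace S) :
    ContinuousBicombing S where
  path := hS.1.path
  path_zero a b := by
    simp [IsGeodesicMetricSpace.path, (hS.1 a b).choose_spec.2.1]
  path_one a b := by
    simp [IsGeodesicMetricSpace.path, (hS.1 a b).choose_spec.2.2]
  metricBtw_path a b t := (hS.1 a b).choose_spec.metricBtw (projIcc_mul_dist_mem_Icc a b t)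
  continuous_path_left := hS.continuous_path_left

end Geodesics

theorem busemann_surface_pasch_general {S : Type*} [MetricSpace S] (hS : IsBusemannSpace S)
    {φ : S → ℝ × ℝ} (hφ : Continuous φ) (hφ_inj : Function.Injective φ)
    (seg : S → S → Set S) (hseg : ∀ x y : S, IsGeodesicSegment x y (seg x y))
    (x y z u v : S) (hu : u ∈ seg x y) (hz : z ∈ seg x v) :
    (seg u v ∩ seg y z).Nonempty := by
  have mem_seg (a b p : S) : p ∈ seg a b ↔ MetricBtw a p b := hS.mem_iff_metricBtw (hseg a b)
  let ψ : C(S, ℂ) := ⟨fun p => Complex.equivRealProdCLM.symm (φ p), by fun_prop⟩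
  have hψ : Function.Injective ψ := Complex.equivRealProdCLM.symm.injective.comp hφ_inj
  obtain ⟨p, hpuv, hpyz⟩ := hS.geodesicBicombing.exists_metricBtw_metricBtw hS.hasLinearIntervals
    hψ ((mem_seg x y u).1 hu) ((mem_seg x v z).1 hz)
  exact ⟨p, (mem_seg u v p).2 hpuv, (mem_seg y z p).2 hpyz⟩

/-- Pasch axiom: if `u ∈ [x,y]` and `z ∈ [x,v]`, then `[u,v] ∩ [y,z] ≠ ∅`. -/
theorem busemann_surface_pasch {S : Type*} [MetricSpace S]
    (hS : IsBusemannSurface S)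
    (seg : S → S → Set S) (hseg : ∀ x y : S, IsGeodesicSegment x y (seg x y))
    (x y z u v : S) (hu : u ∈ seg x y) (hz : z ∈ seg x v) :
    (seg u v ∩ seg y z).Nonempty := by
  obtain ⟨hB, ⟨ψ⟩⟩ := hS
  exact busemann_surface_pasch_general hB ψ.continuous ψ.injective seg hseg x y z u v hu hz
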